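/- Let d = 2κ be even and let γ_d¹, …, γ_d^{d+1} be the Dirac matrices of size 2^κ given by the recursive construction. Then for every permutation σ of {1, …, d+1}, trace( γ_d^{σ(1)} · γ_d^{σ(2)} · ⋯ · γ_d^{σ(d+1)} ) = (2i)^{d/2} · sgn(σ). -/

import Mathlib

open Matrix

/-- Pauli matrix σ₁. -/
noncomputable def pauli1 : Matrix (Fin 2) (Fin 2) ℂ := !![0, 1; 1, 0]

/-- Pauli matrix σ₂. -/
noncomputable def pauli2 : Matrix (Fin 2) (Fin 2) ℂ := !![0, -Complex.I; Complex.I, 0]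

/-- Pauli matrix σ₃. -/
noncomputable def pauli3 : Matrix (Fin 2) (Fin 2) ℂ := !![1, 0; 0, -1]

/-- Re-index a square matrix along an equality of dimensions. -/
noncomputable def castSq {m n : ℕ} (h : m = n) (A : Matrix (Fin m) (Fin m) ℂ) :
    Matrix (Fin n) (Fin n) ℂ :=
  Matrix.reindex (finCongr h) (finCongr h) A

/-- Kronecker product of a 2×2 matrix with an n×n matrix, with indices flattened. -/
noncomputable def kron2 {n : ℕ} (A : Matrix (Fin 2) (Fin 2) ℂ) (B : Matrix (Fin n) (Fin n) ℂ) :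
    Matrix (Fin (2 * n)) (Fin (2 * n)) ℂ :=
  Matrix.reindex finProdFinEquiv finProdFinEquiv (Matrix.kroneckerMap (· * ·) A B)

/-- The recursively constructed Dirac matrices: `diracGamma κ j` is the `j`-th Dirac matrix
(1-indexed, `1 ≤ j ≤ 2κ+1`) of size `2^κ`. For κ = 1 these are the Pauli matrices; the
recursion is `γ_{d+2}^j = σ₁ ⊗ γ_d^j` (`1 ≤ j ≤ d+1`), `γ_{d+2}^{d+2} = σ₂ ⊗ I`,
`γ_{d+2}^{d+3} = σ₃ ⊗ I` for `d = 2κ`. -/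
noncomputable def diracGamma : (κ : ℕ) → ℕ → Matrix (Fin (2 ^ κ)) (Fin (2 ^ κ)) ℂ
  | 0, _ => 1
  | 1, j => castSq (by norm_num)
      (if j = 1 then pauli1 else if j = 2 then pauli2 else if j = 3 then pauli3 else 1)
  | (κ + 2), j => castSq (by rw [pow_succ]; ring)
      (if j ≤ 2 * (κ + 1) + 1 then kron2 pauli1 (diracGamma (κ + 1) j)
       else if j = 2 * (κ + 1) + 2 then kron2 pauli2 1
       else if j = 2 * (κ + 1) + 3 then kron2 pauli3 1
       else 1)

/-!
In a product of pairwise anticommuting elements, exchanging two neighbours changes the sign, so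
reordering the factors multiplies the product by the signature of the permutation. It remains to
multiply the Dirac matrices in their given order. Since `σ₁` occurs an odd number of times in the
first tensor factor and `σ₁σ₂σ₃ = i`, each step of the recursion multiplies this product by `i`;
hence it is the scalar matrix `i^κ` of size `2^κ`, whose trace is `(2i)^κ`.
-/

open scoped Function Kronecker

section Anticommute

/-- Two elements anticommute if exchanging the factors of their product changes its sign. -/
def Anticommute {R : Type*} [Mul R] [Neg R] (a b : R) : Prop :=
  a * b = -(b * a)

theorem Anticommute.symm {R : Type*} [Mul R] [InvolutiveNeg R] {a b : R} (h : Anticommute a b) :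
    Anticommute b a :=
  (neg_eq_iff_eq_neg.mpr h).symm

theorem Anticommute.map {R S F : Type*} [NonUnitalNonAssocRing R] [NonUnitalNonAssocRing S]
    [FunLike F R S] [NonUnitalRingHomClass F R S] (φ : F) {a b : R} (h : Anticommute a b) :
    Anticommute (φ a) (φ b) := by
  rw [Anticommute, ← map_mul, h, map_neg, map_mul]

theorem pairwise_onFun_snoc {α : Type*} {r : α → α → Prop} (hr : ∀ ⦃a b⦄, r a b → r b a) {n : ℕ}
    {f : Fin n → α} {a : α} (hf : Pairwise (r on f)) (ha : ∀ i, r (f i) a) :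
    Pairwise (r on (Fin.snoc f a : Fin (n + 1) → α)) := by
  intro i j hij
  induction i using Fin.lastCases with
  | last =>
    induction j using Fin.lastCases with
    | last => exact absurd rfl hij
    | cast j => simpa [Function.onFun] using hr (ha j)
  | cast i =>
    induction j using Fin.lastCases with
    | last => simpa [Function.onFun] using ha i
    | cast j => simpa [Function.onFun] using hf (ne_of_apply_ne Fin.castSucc hij)

theorem prod_ofFn_snoc {M : Type*} [Monoid M] {n : ℕ} (f : Fin n → M) (a : M) :
    (List.ofFn (Fin.snoc f a : Fin (n + 1) → M)).prod = (List.ofFn f).prod * a := by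
  rw [List.ofFn_succ', List.prod_concat]
  simp only [Fin.snoc_castSucc, Fin.snoc_last]

variable {R : Type*} [Ring R]

theorem prod_ofFn_swap_of_pairwise_anticommute {n : ℕ} {f : Fin (n + 1) → R}
    (hf : Pairwise (Anticommute on f)) (i : Fin n) :
    (List.ofFn fun k => f (Equiv.swap i.castSucc i.succ k)).prod = -(List.ofFn f).prod := by
  induction n with
  | zero => exact i.elim0
  | succ n ih =>
    induction i using Fin.cases with
    | zero =>
      have swap_zero : Equiv.swap (0 : Fin (n + 2)) 1 0 = 1 := Equiv.swap_apply_left _ _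
      have swap_one : Equiv.swap (0 : Fin (n + 2)) 1 1 = 0 := Equiv.swap_apply_right _ _
      have swap_succ_succ (k : Fin n) : Equiv.swap (0 : Fin (n + 2)) 1 k.succ.succ = k.succ.succ :=
        Equiv.swap_apply_of_ne_of_ne (Fin.succ_ne_zero _) (Fin.succ_succ_ne_one k)
      have exchange : f 1 * f 0 = -(f 0 * f 1) := hf Fin.zero_ne_one.symm
      simp only [Fin.castSucc_zero, Fin.succ_zero_eq_one, List.ofFn_succ, List.prod_cons,
        swap_zero, swap_one, swap_succ_succ]
      rw [← mul_assoc, exchange, neg_mul, mul_assoc]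
    | succ i =>
      have swap_zero : Equiv.swap i.succ.castSucc i.succ.succ 0 = 0 :=
        Equiv.swap_apply_of_ne_of_ne (Fin.succ_ne_zero i.castSucc).symm (Fin.succ_ne_zero _).symm
      have swap_succ (k : Fin (n + 1)) : Equiv.swap i.succ.castSucc i.succ.succ k.succ =
          (Equiv.swap i.castSucc i.succ k).succ :=
        (Fin.succ_injective _).swap_apply i.castSucc i.succ k
      have tail_anticommute : Pairwise (Anticommute on fun k : Fin (n + 1) => f k.succ) :=
        hf.comp_of_injective (Fin.succ_injective _)
      rw [List.ofFn_succ, List.ofFn_succ (f := f)]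
      simp only [List.prod_cons, swap_zero, swap_succ]
      rw [ih tail_anticommute i, mul_neg]

theorem prod_ofFn_perm_of_pairwise_anticommute {n : ℕ} {f : Fin n → R}
    (hf : Pairwise (Anticommute on f)) (σ : Equiv.Perm (Fin n)) :
    (List.ofFn fun k => f (σ k)).prod = Equiv.Perm.sign σ • (List.ofFn f).prod := by
  cases n with
  | zero => simp [Subsingleton.elim σ 1]
  | succ n =>
    have hσ : σ ∈ Submonoid.closure (Set.range fun i : Fin n => Equiv.swap i.castSucc i.succ) := by
      rw [Equiv.Perm.mclosure_swap_castSucc_succ]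
      exact Submonoid.mem_top σ
    induction hσ using Submonoid.closure_induction generalizing f with
    | mem τ hτ =>
      obtain ⟨i, rfl⟩ := hτ
      rw [prod_ofFn_swap_of_pairwise_anticommute hf,
        Equiv.Perm.sign_swap Fin.castSucc_lt_succ.ne, Units.neg_smul, one_smul]
    | one => simp
    | mul σ τ _ _ hσ hτ =>
      calc (List.ofFn fun k => f (σ (τ k))).prod
          = Equiv.Perm.sign τ • (List.ofFn fun k => f (σ k)).prod :=
            hτ (hf.comp_of_injective σ.injective)
        _ = Equiv.Perm.sign (σ * τ) • (List.ofFn f).prod := by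
            rw [hσ hf, smul_smul, Equiv.Perm.sign_mul, mul_comm]

end Anticommute

section Kronecker

variable {l m R : Type*} [Fintype l] [Fintype m]

theorem Anticommute.kronecker_commute [CommRing R] {A B : Matrix l l R} {C D : Matrix m m R}
    (hAB : Anticommute A B) (hCD : Commute C D) : Anticommute (A ⊗ₖ C) (B ⊗ₖ D) := by
  rw [Anticommute, ← mul_kronecker_mul, ← mul_kronecker_mul, hAB, hCD.eq,
    ← neg_one_smul R (B * A), smul_kronecker, neg_one_smul]

theorem Anticommute.commute_kronecker [CommRing R] {A B : Matrix l l R} {C D : Matrix m m R}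
    (hCD : Anticommute C D) (hAB : Commute A B) : Anticommute (A ⊗ₖ C) (B ⊗ₖ D) := by
  rw [Anticommute, ← mul_kronecker_mul, ← mul_kronecker_mul, hAB.eq, hCD,
    ← neg_one_smul R (D * C), kronecker_smul, neg_one_smul]

theorem prod_ofFn_kronecker [CommSemiring R] [DecidableEq l] [DecidableEq m]
    (A : Matrix l l R) {n : ℕ} (γ : Fin n → Matrix m m R) :
    (List.ofFn fun i => A ⊗ₖ γ i).prod = (A ^ n) ⊗ₖ (List.ofFn γ).prod := by
  induction n with
  | zero => simp
  | succ n ih => simp only [List.ofFn_succ, List.prod_cons, ih, ← mul_kronecker_mul, pow_succ']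

end Kronecker

section Pauli

theorem pauli1_mul_self : pauli1 * pauli1 = 1 := by
  simp [pauli1, one_fin_two]

theorem pauli1_anticommute_pauli2 : Anticommute pauli1 pauli2 := by
  simp [Anticommute, pauli1, pauli2]

theorem pauli1_anticommute_pauli3 : Anticommute pauli1 pauli3 := by
  simp [Anticommute, pauli1, pauli3]

theorem pauli2_anticommute_pauli3 : Anticommute pauli2 pauli3 := by
  simp [Anticommute, pauli2, pauli3]

theorem pauli1_mul_pauli2_mul_pauli3 : pauli1 * pauli2 * pauli3 = Complex.I • 1 := by
  simp [pauli1, pauli2, pauli3, one_fin_two]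

theorem pauli1_pow_of_odd {n : ℕ} (hn : Odd n) : pauli1 ^ n = pauli1 := by
  obtain ⟨k, rfl⟩ := hn
  rw [pow_succ, pow_mul, pow_two, pauli1_mul_self, one_pow, one_mul]

variable {m : Type*} [DecidableEq m]

/-- The step of the recursive construction of the Dirac matrices, for an arbitrary family of
matrices: tensor the family with `σ₁` and append `σ₂ ⊗ 1` and `σ₃ ⊗ 1`. The index set
`Fin 2 × m` of the Kronecker product is not flattened here. -/
noncomputable def pauliExtension {n : ℕ} (γ : Fin n → Matrix m m ℂ) :
    Fin (n + 2) → Matrix (Fin 2 × m) (Fin 2 × m) ℂ :=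
  Fin.snoc (Fin.snoc (fun i => pauli1 ⊗ₖ γ i) (pauli2 ⊗ₖ 1) : Fin (n + 1) → _) (pauli3 ⊗ₖ 1)

variable [Fintype m] {n : ℕ} {γ : Fin n → Matrix m m ℂ}

theorem pairwise_anticommute_pauliExtension (hγ : Pairwise (Anticommute on γ)) :
    Pairwise (Anticommute on (pauliExtension γ)) := by
  refine pairwise_onFun_snoc (fun _ _ => Anticommute.symm)
    (pairwise_onFun_snoc (fun _ _ => Anticommute.symm) ?_ ?_) ?_
  · exact fun i j hij => (hγ hij).commute_kronecker (Commute.refl pauli1)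
  · exact fun i => pauli1_anticommute_pauli2.kronecker_commute (Commute.one_right (γ i))
  · intro i
    induction i using Fin.lastCases with
    | last =>
      simpa using pauli2_anticommute_pauli3.kronecker_commute (Commute.one_right (1 : Matrix m m ℂ))
    | cast i => simpa using pauli1_anticommute_pauli3.kronecker_commute (Commute.one_right (γ i))

theorem prod_ofFn_pauliExtension (hn : Odd n) :
    (List.ofFn (pauliExtension γ)).prod =
      Complex.I • ((1 : Matrix (Fin 2) (Fin 2) ℂ) ⊗ₖ (List.ofFn γ).prod) := by
  rw [pauliExtension, prod_ofFn_snoc, prod_ofFn_snoc, prod_ofFn_kronecker, pauli1_pow_of_odd hn,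
    ← mul_kronecker_mul, ← mul_kronecker_mul, pauli1_mul_pauli2_mul_pauli3, mul_one, mul_one,
    smul_kronecker]

end Pauli

section Dirac

/-- The Dirac matrices `γ_d^1, …, γ_d^{d+1}` for `d = 2κ` as a family indexed from `0`. -/
noncomputable def diracFamily (κ : ℕ) (i : Fin (2 * κ + 1)) :
    Matrix (Fin (2 ^ κ)) (Fin (2 ^ κ)) ℂ :=
  diracGamma κ (i + 1)

/-- Flattening of the index set of a Kronecker product of a matrix of size `2` with one of size
`2 ^ κ`, as an isomorphism of matrix algebras. -/
noncomputable def flattenKronecker (κ : ℕ) :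
    Matrix (Fin 2 × Fin (2 ^ κ)) (Fin 2 × Fin (2 ^ κ)) ℂ ≃ₐ[ℂ]
      Matrix (Fin (2 ^ (κ + 1))) (Fin (2 ^ (κ + 1))) ℂ :=
  reindexAlgEquiv ℂ ℂ (finProdFinEquiv.trans (finCongr (pow_succ' 2 κ).symm))

theorem castSq_eq_flattenKronecker_zero (A : Matrix (Fin 2) (Fin 2) ℂ) :
    castSq (pow_one 2).symm A = flattenKronecker 0 (A ⊗ₖ 1) := by
  ext i j
  fin_cases i <;> fin_cases j <;>
    simp [castSq, flattenKronecker, finProdFinEquiv, Fin.divNat, Fin.modNat]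

theorem castSq_kron2_eq_flattenKronecker {κ : ℕ} (A : Matrix (Fin 2) (Fin 2) ℂ)
    (B : Matrix (Fin (2 ^ κ)) (Fin (2 ^ κ)) ℂ) :
    castSq (pow_succ' 2 κ).symm (kron2 A B) = flattenKronecker κ (A ⊗ₖ B) :=
  rfl

-- This includes `κ = 0`: the Pauli matrices extend the family consisting of the `1 × 1` identity.
theorem diracFamily_succ (κ : ℕ) (i : Fin (2 * κ + 1 + 2)) :
    diracFamily (κ + 1) i = flattenKronecker κ (pauliExtension (diracFamily κ) i) := by
  cases κ with
  | zero => fin_cases i <;> exact castSq_eq_flattenKronecker_zero _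
  | succ κ =>
    induction i using Fin.lastCases with
    | last => simp [diracFamily, diracGamma, pauliExtension, castSq_kron2_eq_flattenKronecker]
    | cast i =>
      induction i using Fin.lastCases with
      | last => simp [diracFamily, diracGamma, pauliExtension, castSq_kron2_eq_flattenKronecker]
      | cast i =>
        simp [diracFamily, diracGamma, pauliExtension, castSq_kron2_eq_flattenKronecker, i.is_le]

theorem pairwise_anticommute_diracFamily (κ : ℕ) :
    Pairwise (Anticommute on (diracFamily κ)) := by
  induction κ with
  | zero => exact fun i j hij => absurd (Subsingleton.elim (α := Fin 1) i j) hij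
  | succ κ ih =>
    intro i j hij
    rw [Function.onFun, diracFamily_succ, diracFamily_succ]
    exact (pairwise_anticommute_pauliExtension ih hij).map (flattenKronecker κ)

theorem prod_ofFn_diracFamily (κ : ℕ) :
    (List.ofFn (diracFamily κ)).prod = Complex.I ^ κ • 1 := by
  induction κ with
  | zero => simp [diracFamily, diracGamma]
  | succ κ ih =>
    calc (List.ofFn (diracFamily (κ + 1))).prod
        = flattenKronecker κ (List.ofFn (pauliExtension (diracFamily κ))).prod := by
          rw [map_list_prod, List.map_ofFn]
          exact congrArg (fun f => (List.ofFn f).prod) (funext (diracFamily_succ κ))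
      _ = Complex.I ^ (κ + 1) • 1 := by
          rw [prod_ofFn_pauliExtension (odd_two_mul_add_one κ), ih, kronecker_smul,
            one_kronecker_one, smul_smul, ← pow_succ', map_smul, map_one]

end Dirac

/-- For even `d = 2κ`, the trace of a product of all `d+1` Dirac matrices in any order is
`(2i)^{d/2}` times the signature of the permutation. -/
theorem trace_dirac_perm (κ : ℕ) (hκ : 1 ≤ κ) (σ : Equiv.Perm (Fin (2 * κ + 1))) :
    Matrix.trace ((List.ofFn fun i : Fin (2 * κ + 1) => diracGamma κ ((σ i : ℕ) + 1)).prod)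
      = (2 * Complex.I) ^ κ * ((Equiv.Perm.sign σ : ℤ) : ℂ) := by
  have reorder : (List.ofFn fun i => diracFamily κ (σ i)).prod =
      Equiv.Perm.sign σ • (List.ofFn (diracFamily κ)).prod :=
    prod_ofFn_perm_of_pairwise_anticommute (pairwise_anticommute_diracFamily κ) σ
  calc trace (List.ofFn fun i => diracFamily κ (σ i)).prod
      = trace (Equiv.Perm.sign σ • Complex.I ^ κ • (1 : Matrix (Fin (2 ^ κ)) (Fin (2 ^ κ)) ℂ)) := by
        rw [reorder, prod_ofFn_diracFamily]
    _ = ((Equiv.Perm.sign σ : ℤ) : ℂ) * (Complex.I ^ κ * 2 ^ κ) := by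
        rw [Units.smul_def, trace_smul, trace_smul, trace_one, zsmul_eq_mul, smul_eq_mul,
          Fintype.card_fin, Nat.cast_pow, Nat.cast_ofNat]
    _ = (2 * Complex.I) ^ κ * ((Equiv.Perm.sign σ : ℤ) : ℂ) := by ring
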